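/- Let T = T[0]T[1]...T[n-1] be a string of length n ≥ 1 over a linearly ordered alphabet such that T[n-1] is strictly smaller than every other symbol occurring in T and occurs only at position n-1. Fix 0 ≤ i < n and let j = min{ k : i < k < n and T_k <_lex T_i } if such k exists, and j = n otherwise. Then for every length ℓ with j - i < ℓ ≤ n - i, the substring T[i..i+ℓ-1] is not a Lyndon word. -/

import Mathlib

/-- The suffix `T[i..n-1]` of the string of length `n` represented by `T : ℕ → α`. -/
def suffixAt {α : Type*} (T : ℕ → α) (n i : ℕ) : List α :=
  (List.range (n - i)).map (fun k => T (i + k))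

/-- A Lyndon word: a nonempty string strictly lexicographically smaller than
all of its proper nonempty suffixes. -/
def IsLyndon {α : Type*} [LinearOrder α] (w : List α) : Prop :=
  w ≠ [] ∧ ∀ i, 0 < i → i < w.length → List.Lex (· < ·) w (w.drop i)

theorem lex_append_append_of_length_le {α : Type*} {r : α → α → Prop} {u v : List α}
    (huv : List.Lex r u v) (hlen : v.length ≤ u.length) (x y : List α) :
    List.Lex r (u ++ x) (v ++ y) := by
  induction huv with
  | nil => simp at hlen
  | rel hab => exact .rel hab
  | cons _ ih => exact .cons (ih (by simpa using hlen))

theorem length_suffixAt {α : Type*} (T : ℕ → α) (n i : ℕ) :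
    (suffixAt T n i).length = n - i := by
  simp [suffixAt]

theorem drop_suffixAt {α : Type*} (T : ℕ → α) (n i d : ℕ) :
    (suffixAt T n i).drop d = suffixAt T n (i + d) := by
  apply List.ext_getElem
  · simp [length_suffixAt, Nat.sub_sub]
  · simp [suffixAt, Nat.add_assoc]

section LinearOrder

variable {α : Type*} [LinearOrder α]

-- `u` is not a prefix of the shorter `u.drop d`, so a mismatched letter decides `u < u.drop d`, and
-- the rest of `w` cannot change that.
theorem IsLyndon.lex_drop_of_prefix {u w : List α} (hu : IsLyndon u) (huw : u <+: w)
    {d : ℕ} (hd : 0 < d) (hdu : d < u.length) : List.Lex (· < ·) w (w.drop d) := by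
  obtain ⟨v, rfl⟩ := huw
  rw [List.drop_append_of_le_length hdu.le]
  exact lex_append_append_of_length_le (hu.2 d hd hdu) (by simp) v v

theorem not_isLyndon_take_suffixAt {T : ℕ → α} {n i k ℓ : ℕ} (hik : i < k) (hkn : k < n)
    (hlex : List.Lex (· < ·) (suffixAt T n k) (suffixAt T n i)) (hℓ : k - i < ℓ) :
    ¬ IsLyndon ((suffixAt T n i).take ℓ) := by
  intro hL
  have hlt : k - i < ((suffixAt T n i).take ℓ).length := by
    rw [List.length_take, length_suffixAt]
    omega
  have hlex' := hL.lex_drop_of_prefix (List.take_prefix ℓ _) (Nat.sub_pos_of_lt hik) hlt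
  rw [drop_suffixAt, Nat.add_sub_cancel' hik.le] at hlex'
  exact asymm hlex hlex'

theorem longer_prefixes_not_lyndon_general (T : ℕ → α) (n i j : ℕ)
    (hj : j = sInf {k | k = n ∨
      (i < k ∧ k < n ∧ List.Lex (· < ·) (suffixAt T n k) (suffixAt T n i))}) :
    ∀ ℓ, j - i < ℓ → ℓ ≤ n - i → ¬ IsLyndon ((suffixAt T n i).take ℓ) := by
  intro ℓ hjℓ hℓn
  have hmem := Nat.sInf_mem (s := {k | k = n ∨
    (i < k ∧ k < n ∧ List.Lex (· < ·) (suffixAt T n k) (suffixAt T n i))}) ⟨n, Or.inl rfl⟩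
  rw [← hj] at hmem
  rcases hmem with rfl | ⟨hij, hjn, hlex⟩
  · exact absurd hjℓ hℓn.not_gt
  · exact not_isLyndon_take_suffixAt hij hjn hlex hjℓ

end LinearOrder

/-- With `j` the smallest index `k > i` such that `T_k <_lex T_i`
(or `j = n` if no such `k` exists), no prefix of `T_i` of length `ℓ` with
`j - i < ℓ ≤ n - i` is a Lyndon word. -/
theorem longer_prefixes_not_lyndon {α : Type*} [LinearOrder α] (T : ℕ → α) (n : ℕ)
    (hn : 1 ≤ n)
    (hend : ∀ k, k < n - 1 → T (n - 1) < T k)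
    (i : ℕ) (hi : i < n) (j : ℕ)
    (hj : j = sInf {k | k = n ∨
      (i < k ∧ k < n ∧ List.Lex (· < ·) (suffixAt T n k) (suffixAt T n i))}) :
    ∀ ℓ, j - i < ℓ → ℓ ≤ n - i → ¬ IsLyndon ((suffixAt T n i).take ℓ) :=
  longer_prefixes_not_lyndon_general T n i j hj
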